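/- Let s ∈ (1/2, 1] and let F : ℝ → ℝ be a smooth (C^∞) function such that both F' and F'' are bounded on ℝ. Then there exists a constant C > 0 (depending on F and s) such that for all v, w ∈ H^s(𝕋) one has ‖F∘v − F∘w‖_{H^s} ≤ C ( ‖v − w‖_{H^s} + ‖w‖_{H^s} ‖v − w‖_{L^∞} ). -/

import Mathlib

/-!
Put `u = F ∘ v - F ∘ w`, `g = v - w` and `M = ‖g‖_{L^∞}`. Two applications of the mean value
theorem (`second_difference`) give, at every point `x` and for every step `h`,
`|u(x+h) - u(x)| ≤ K |g(x+h) - g(x)| + K M |w(x+h) - w(x)|`.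
Squaring, integrating in `x` and applying Parseval (`parseval_increment`) turns this into
`Σ φ(nh) |û(n)|² ≤ 2K² Σ φ(nh) (|ĝ(n)|² + M² |ŵ(n)|²)` for all `h`,
where `φ(x) = |e^{2πix} - 1|²`.

The weights `φ(nh)` can be replaced by `|n|^{2s}` (`transfer`). For `s < 1` one integrates against
`h^{-1-2s} dh` over `(0, ∞)`, which by scaling produces `c |n|^{2s}` with `0 < c < ∞`. For `s = 1`
this integral diverges; instead, on a finite set of frequencies and for `h` small, `φ(nh)` is
comparable to `(nh)²`, with constants independent of the finite set.

The zeroth-order part `Σ |û(n)|² ≤ K² Σ |ĝ(n)|²` follows from `|u| ≤ K |g|`, and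
`(1 + n²)^s ≤ 1 + |n|^{2s}` combines the two bounds.
-/

open MeasureTheory
open scoped ENNReal

noncomputable section

instance : Fact ((0 : ℝ) < 1) := ⟨zero_lt_one⟩

/-- The `H^s` norm (with values in `[0,∞]`) of a real-valued function on the
torus `𝕋 = ℝ/ℤ`, defined through its Fourier coefficients:
`‖v‖_{H^s}² = Σ_{n∈ℤ} (1+n²)^s |v̂(n)|²`. -/
def hsNorm (s : ℝ) (v : AddCircle (1 : ℝ) → ℝ) : ℝ≥0∞ :=
  (∑' n : ℤ, ENNReal.ofReal ((1 + (n : ℝ) ^ 2) ^ s) *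
      (‖fourierCoeff (fun x => (v x : ℂ)) n‖₊ : ℝ≥0∞) ^ 2) ^ (1 / 2 : ℝ)

/-! ### The symbol of the increments -/

/-- The squared modulus `|e^{2πix} - 1|²`. -/
def phi (x : ℝ) : ℝ := 2 - 2 * Real.cos (2 * Real.pi * x)

lemma phi_nonneg (x : ℝ) : 0 ≤ phi x := by
  unfold phi; linarith [Real.cos_le_one (2 * Real.pi * x)]

lemma phi_le_four (x : ℝ) : phi x ≤ 4 := by
  unfold phi; linarith [Real.neg_one_le_cos (2 * Real.pi * x)]

lemma phi_le_sq (x : ℝ) : phi x ≤ 4 * Real.pi ^ 2 * x ^ 2 := by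
  unfold phi; linarith [Real.one_sub_sq_div_two_le_cos (x := 2 * Real.pi * x)]

lemma le_phi {x : ℝ} (hx : |x| ≤ 1 / 2) : 16 * x ^ 2 ≤ phi x := by
  have hpi := Real.pi_pos
  have h := Real.cos_le_one_sub_mul_cos_sq (x := 2 * Real.pi * x) (by
    rw [abs_mul, abs_of_pos (by positivity)]; nlinarith)
  have e : 2 / Real.pi ^ 2 * (2 * Real.pi * x) ^ 2 = 8 * x ^ 2 := by field_simp; ring
  unfold phi; linarith

lemma phi_abs (x : ℝ) : phi |x| = phi x := by
  unfold phi
  rcases abs_choice x with h | h <;> rw [h]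
  rw [mul_neg, Real.cos_neg]

lemma continuous_phi : Continuous phi := by unfold phi; fun_prop

/-! ### Parseval's identity for increments -/

lemma parseval (f : AddCircle (1 : ℝ) → ℂ) (hf : Continuous f) :
    ∑' n : ℤ, (‖fourierCoeff f n‖₊ : ℝ≥0∞) ^ 2 =
      ∫⁻ x, ‖f x‖ₑ ^ 2 ∂AddCircle.haarAddCircle := by
  have hm : MemLp f 2 (AddCircle.haarAddCircle (T := (1 : ℝ))) := by
    exact hf.memLp_of_hasCompactSupport (HasCompactSupport.of_compactSpace _)
  have h := hasSum_sq_fourierCoeff (hm.toLp f)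
  rw [fourierCoeff_congr_ae hm.coeFn_toLp] at h
  have e : ∫ t, ‖hm.toLp f t‖ ^ 2 ∂AddCircle.haarAddCircle
      = ∫ t, ‖f t‖ ^ 2 ∂AddCircle.haarAddCircle := by
    apply integral_congr_ae
    filter_upwards [hm.coeFn_toLp] with x hx
    rw [hx]
  rw [e] at h
  have hi : Integrable (fun t => ‖f t‖ ^ 2) (AddCircle.haarAddCircle (T := (1 : ℝ))) :=
    (Continuous.integrable_of_hasCompactSupport (by fun_prop)
      (HasCompactSupport.of_compactSpace _))
  have h2 := congrArg ENNReal.ofReal h.tsum_eq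
  rw [ENNReal.ofReal_tsum_of_nonneg (fun _ => by positivity) h.summable,
    ofReal_integral_eq_lintegral_ofReal hi (ae_of_all _ fun _ => by positivity)] at h2
  simp_rw [ENNReal.ofReal_pow (norm_nonneg _), ofReal_norm] at h2
  exact h2

lemma fourierCoeff_translate (f : AddCircle (1 : ℝ) → ℂ) (a : AddCircle (1 : ℝ)) (n : ℤ) :
    fourierCoeff (fun x => f (x + a)) n = fourier n a * fourierCoeff f n := by
  unfold fourierCoeff
  rw [← integral_add_right_eq_self (fun t => fourier (-n) t • f t) a, ← integral_const_mul]
  refine integral_congr_ae (ae_of_all _ fun t => ?_)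
  have h1 : fourier (-n) (t + a) = fourier (-n) t * fourier (-n) a := by
    simp only [fourier_apply, smul_add, AddCircle.toCircle_add, Circle.coe_mul]
  have h2 : (fourier n a : ℂ) * fourier (-n) a = 1 := by
    rw [← fourier_add, add_neg_cancel, fourier_zero]
  simp only [smul_eq_mul, h1]
  linear_combination (-(fourier (-n) t) * f (t + a)) * h2

lemma norm_fourier_sub_one_sq (n : ℤ) (h : ℝ) :
    ‖(fourier n (h : AddCircle (1 : ℝ)) : ℂ) - 1‖ ^ 2 = phi (n * h) := by
  have e : (2 * (Real.pi : ℂ) * Complex.I * n * h / (1 : ℝ))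
      = ((2 * Real.pi * (n * h) : ℝ) : ℂ) * Complex.I := by push_cast; ring
  rw [fourier_coe_apply, e, Complex.exp_mul_I, ← Complex.ofReal_cos, ← Complex.ofReal_sin,
    Complex.sq_norm, Complex.normSq_apply]
  simp only [Complex.sub_re, Complex.add_re, Complex.ofReal_re, Complex.mul_re, Complex.I_re,
    Complex.ofReal_im, Complex.I_im, Complex.one_re, Complex.sub_im, Complex.add_im,
    Complex.mul_im, Complex.one_im, phi]
  nlinarith [Real.sin_sq_add_cos_sq (2 * Real.pi * (n * h))]

/-- Parseval's identity for the increment `v(· + h) - v`. -/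
lemma parseval_increment (v : AddCircle (1 : ℝ) → ℝ) (hv : Continuous v) (h : ℝ) :
    ∑' n : ℤ, ENNReal.ofReal (phi (n * h)) *
        (‖fourierCoeff (fun x => (v x : ℂ)) n‖₊ : ℝ≥0∞) ^ 2 =
      ∫⁻ x, ‖v (x + (h : AddCircle (1 : ℝ))) - v x‖ₑ ^ 2 ∂AddCircle.haarAddCircle := by
  have hc : Continuous fun x => (v x : ℂ) := by fun_prop
  have hint : ∀ f : AddCircle (1 : ℝ) → ℂ, Continuous f →
      Integrable f (AddCircle.haarAddCircle (T := (1 : ℝ))) := fun f hf =>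
    hf.integrable_of_hasCompactSupport (HasCompactSupport.of_compactSpace _)
  have key := parseval (fun x => (v (x + (h : AddCircle (1 : ℝ))) : ℂ) - v x) (by fun_prop)
  have hco : ∀ n, fourierCoeff (fun x => (v (x + (h : AddCircle (1 : ℝ))) : ℂ) - v x) n =
      ((fourier n (h : AddCircle (1 : ℝ)) : ℂ) - 1) * fourierCoeff (fun x => (v x : ℂ)) n := by
    intro n
    rw [sub_mul, one_mul, ← fourierCoeff_translate (fun x => (v x : ℂ))]
    have hsub := fourierCoeff.add (hint (fun x => (v (x + (h : AddCircle (1 : ℝ))) : ℂ) - v x) (by fun_prop))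
      (hint _ hc)
    have e : ((fun x => (v (x + (h : AddCircle (1 : ℝ))) : ℂ) - v x) + fun x => (v x : ℂ))
        = fun x => (v (x + (h : AddCircle (1 : ℝ))) : ℂ) := by ext x; simp
    rw [e] at hsub
    rw [hsub]; simp
  have hr : ∀ x, ‖(v (x + (h : AddCircle (1 : ℝ))) : ℂ) - v x‖ₑ = ‖v (x + (h : AddCircle (1 : ℝ))) - v x‖ₑ := by
    intro x
    rw [← Complex.ofReal_sub, ← ofReal_norm, ← ofReal_norm, Complex.norm_real]
  simp_rw [hr] at key
  rw [← key]
  refine tsum_congr fun n => ?_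
  rw [hco, ← norm_fourier_sub_one_sq, nnnorm_mul, ENNReal.coe_mul, mul_pow,
    ENNReal.ofReal_pow (norm_nonneg _), ofReal_norm]
  rfl

/-! ### The pointwise estimate -/

/-- With `g = a - b`, the left-hand side splits as
`(F c - F (d + g)) + ((F (d + g) - F d) - (F (b + g) - F b))`. The first part is Lipschitz in
`c - d - g`; the second is an increment of `t ↦ F (t + g) - F t`, whose derivative is at most
`K |g|` because `F'` is `K`-Lipschitz. -/
lemma second_difference (F : ℝ → ℝ) (hF : ContDiff ℝ (⊤ : ℕ∞) F) (K : ℝ)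
    (hK₁ : ∀ x : ℝ, |deriv F x| ≤ K) (hK₂ : ∀ x : ℝ, |deriv (deriv F) x| ≤ K) (a b c d : ℝ) :
    |(F c - F d) - (F a - F b)| ≤ K * |(c - d) - (a - b)| + K * |a - b| * |d - b| := by
  have hd : Differentiable ℝ F := hF.differentiable (by simp)
  have hd2 : Differentiable ℝ (deriv F) :=
    (hF.iterate_deriv 1).differentiable (by simp)
  have lip : ∀ (G : ℝ → ℝ), Differentiable ℝ G → ∀ L, (∀ x, |deriv G x| ≤ L) →
      ∀ x y, |G y - G x| ≤ L * |y - x| := fun G hG L hL x y =>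
    convex_univ.norm_image_sub_le_of_norm_deriv_le (f := G) (fun z _ => hG z)
      (fun z _ => hL z) (Set.mem_univ x) (Set.mem_univ y)
  set g := a - b with hg
  have h1 := lip F hd K hK₁ (d + g) c
  have h2 := lip (fun t => F (t + g) - F t) (by fun_prop) (K * |g|) (by
    intro t
    rw [deriv_fun_sub (by fun_prop) (by fun_prop), deriv_comp_add_const]
    simpa using lip _ hd2 K hK₂ t (t + g)) b d
  have e1 : c - (d + g) = c - d - g := by ring
  have e2 : F c - F d - (F a - F b) =
      (F c - F (d + g)) + ((F (d + g) - F d) - (F (b + g) - F b)) := by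
    rw [hg]; ring_nf
  rw [e1] at h1
  rw [e2]
  exact (abs_add_le _ _).trans (add_le_add h1 h2)

/-! ### From increments to Sobolev weights -/

/-- Integrating the symbol `φ(nh)` of the increments against `h^{-1-2s} dh` gives, by scaling,
a multiple of `|n|^{2s}`. Convergence at `0` is where `s < 1` is needed. -/
lemma lintegral_weight (s : ℝ) (hs₀ : 0 < s) (hs₁ : s < 1) :
    ∃ c : ℝ, 0 < c ∧ ∀ n : ℤ,
      ∫⁻ h in Set.Ioi (0 : ℝ), ENNReal.ofReal (phi (n * h) * h ^ (-1 - 2 * s)) =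
        ENNReal.ofReal (c * |(n : ℝ)| ^ (2 * s)) := by
  set f : ℝ → ℝ := fun h => phi h * h ^ (-1 - 2 * s) with hf
  have hmeas : Measurable f := by
    have := continuous_phi.measurable
    fun_prop
  have hnn : ∀ h ∈ Set.Ioi (0 : ℝ), 0 ≤ f h := fun h hh =>
    mul_nonneg (phi_nonneg _) (Real.rpow_nonneg (le_of_lt hh) _)
  have hi1 : IntegrableOn f (Set.Ioc 0 1) := by
    have hb : IntegrableOn (fun h : ℝ => 4 * Real.pi ^ 2 * h ^ (1 - 2 * s)) (Set.Ioc 0 1) := by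
      have := (intervalIntegral.intervalIntegrable_rpow' (a := 0) (b := 1)
        (show -1 < 1 - 2 * s by linarith))
      rw [intervalIntegrable_iff_integrableOn_Ioc_of_le zero_le_one] at this
      exact this.const_mul _
    refine Integrable.mono' hb hmeas.aestronglyMeasurable ?_
    filter_upwards [ae_restrict_mem measurableSet_Ioc] with h hh
    rw [Real.norm_of_nonneg (hnn h hh.1)]
    have e : h ^ (1 - 2 * s) = h ^ 2 * h ^ (-1 - 2 * s) := by
      rw [← Real.rpow_natCast, ← Real.rpow_add hh.1]; congr 1; push_cast; ring
    rw [e, ← mul_assoc]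
    exact mul_le_mul_of_nonneg_right (phi_le_sq h) (Real.rpow_nonneg hh.1.le _)
  have hi2 : IntegrableOn f (Set.Ioi 1) := by
    have hb := (integrableOn_Ioi_rpow_of_lt (show -1 - 2 * s < -1 by linarith)
      zero_lt_one).const_mul 4
    refine Integrable.mono' hb hmeas.aestronglyMeasurable ?_
    filter_upwards [ae_restrict_mem measurableSet_Ioi] with h hh
    have hh0 : (0 : ℝ) < h := zero_lt_one.trans hh
    rw [Real.norm_of_nonneg (hnn h hh0)]
    exact mul_le_mul_of_nonneg_right (phi_le_four h) (Real.rpow_nonneg hh0.le _)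
  have hi : IntegrableOn f (Set.Ioi 0) := by
    rw [← Set.Ioc_union_Ioi_eq_Ioi (zero_le_one (α := ℝ))]; exact hi1.union hi2
  refine ⟨∫ h in Set.Ioi 0, f h, ?_, fun n => ?_⟩
  · rw [setIntegral_pos_iff_support_of_nonneg_ae
      ((ae_restrict_mem measurableSet_Ioi).mono hnn) hi]
    have hsub : Set.Ioo (0 : ℝ) (1 / 2) ⊆ Function.support f ∩ Set.Ioi 0 := by
      intro h hh
      have h1 := le_phi (x := h) (by rw [abs_of_pos hh.1]; exact hh.2.le)
      have h0 : 0 < h := hh.1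
      have h2 : 0 < phi h := lt_of_lt_of_le (by positivity) h1
      exact ⟨(mul_pos h2 (Real.rpow_pos_of_pos h0 _)).ne', h0⟩
    exact lt_of_lt_of_le (by simp) (measure_mono hsub)
  · rcases eq_or_ne n 0 with rfl | hn
    · simp [phi, Real.zero_rpow (show 2 * s ≠ 0 by linarith)]
    · have hN : 0 < |(n : ℝ)| := abs_pos.mpr (Int.cast_ne_zero.mpr hn)
      -- substitution `h ↦ |n| h`
      have hpt : ∀ h ∈ Set.Ioi (0 : ℝ), phi (n * h) * h ^ (-1 - 2 * s) =
          |(n : ℝ)| ^ (1 + 2 * s) * f (|(n : ℝ)| * h) := by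
        intro h hh
        have hh0 : (0 : ℝ) < h := hh
        have e : |(n : ℝ)| * h = |n * h| := by rw [abs_mul, abs_of_pos hh0]
        have e2 : |(n : ℝ)| ^ (1 + 2 * s) * |(n : ℝ)| ^ (-1 - 2 * s) = 1 := by
          rw [← Real.rpow_add hN]; ring_nf; simp
        simp only [hf]
        rw [Real.mul_rpow hN.le hh0.le, e, phi_abs]
        linear_combination (-(phi (n * h) * h ^ (-1 - 2 * s))) * e2
      rw [setLIntegral_congr_fun measurableSet_Ioi fun h hh => by rw [hpt h hh]]
      rw [← ofReal_integral_eq_lintegral_ofReal, integral_const_mul,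
        integral_comp_mul_left_Ioi f 0 hN, mul_zero, smul_eq_mul]
      · congr 1
        rw [add_comm, Real.rpow_add_one hN.ne']
        field_simp
      · refine Integrable.const_mul ?_ _
        exact (integrableOn_Ioi_comp_mul_left_iff f 0 hN).2 (by simpa using hi)
      · filter_upwards [ae_restrict_mem measurableSet_Ioi] with h hh
        exact mul_nonneg (by positivity) (hnn _ (mul_pos hN hh))

/-- An inequality between quadratic increments, valid for every step `h`, passes to the
homogeneous Sobolev weights: for `s < 1` by integrating against `h^{-1-2s} dh`, for `s = 1` by
taking `h` small on each finite set of frequencies. -/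
lemma transfer (s : ℝ) (hs₀ : 0 < s) (hs₁ : s ≤ 1) (α β : ℤ → ℝ≥0∞)
    (H : ∀ h : ℝ, ∑' n : ℤ, ENNReal.ofReal (phi (n * h)) * α n ≤
      ∑' n : ℤ, ENNReal.ofReal (phi (n * h)) * β n) :
    ∑' n : ℤ, ENNReal.ofReal (|(n : ℝ)| ^ (2 * s)) * α n ≤
      3 * ∑' n : ℤ, ENNReal.ofReal (|(n : ℝ)| ^ (2 * s)) * β n := by
  rcases hs₁.lt_or_eq with hlt | rfl
  · obtain ⟨c, hc, hw⟩ := lintegral_weight s hs₀ hlt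
    have hphi := continuous_phi.measurable
    have key : ∀ γ : ℤ → ℝ≥0∞,
        ∫⁻ h in Set.Ioi (0 : ℝ), ENNReal.ofReal (h ^ (-1 - 2 * s)) *
          ∑' n : ℤ, ENNReal.ofReal (phi (n * h)) * γ n =
        ENNReal.ofReal c * ∑' n : ℤ, ENNReal.ofReal (|(n : ℝ)| ^ (2 * s)) * γ n := by
      intro γ
      rw [← ENNReal.tsum_mul_left]
      rw [lintegral_congr fun h => ENNReal.tsum_mul_left.symm]
      rw [lintegral_tsum (fun n => by fun_prop)]
      refine tsum_congr fun n => ?_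
      rw [← mul_assoc, ← ENNReal.ofReal_mul hc.le, ← hw n,
        ← lintegral_mul_const _ (by fun_prop)]
      refine lintegral_congr fun h => ?_
      rw [ENNReal.ofReal_mul (phi_nonneg _)]
      ring
    have h1 : ENNReal.ofReal c * ∑' n : ℤ, ENNReal.ofReal (|(n : ℝ)| ^ (2 * s)) * α n ≤
        ENNReal.ofReal c * ∑' n : ℤ, ENNReal.ofReal (|(n : ℝ)| ^ (2 * s)) * β n := by
      rw [← key, ← key]
      exact lintegral_mono fun h => mul_le_mul_right (H h) _
    rw [ENNReal.mul_le_mul_iff_right (by simpa using hc) ENNReal.ofReal_ne_top] at h1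
    exact h1.trans (le_mul_of_one_le_left zero_le (by norm_num))
  · have e : ∀ n : ℤ, |(n : ℝ)| ^ (2 * (1 : ℝ)) = (n : ℝ) ^ 2 := by
      intro n
      rw [mul_one, Real.rpow_two, sq_abs]
    simp_rw [e]
    rw [ENNReal.tsum_eq_iSup_sum]
    refine iSup_le fun T => ?_
    obtain ⟨N, hN0, hN⟩ : ∃ N : ℝ, 0 < N ∧ ∀ n ∈ T, |(n : ℝ)| ≤ N := by
      refine ⟨∑ n ∈ T, |(n : ℝ)| + 1, by positivity, fun n hn => ?_⟩
      have := Finset.single_le_sum (f := fun n : ℤ => |(n : ℝ)|) (fun _ _ => abs_nonneg _) hn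
      linarith
    -- with `h = 1/(2N)`, `φ(nh)` is comparable to `(nh)²` for all `n ∈ T`
    set h : ℝ := 1 / (2 * N) with hh
    have hpos : 0 < h := by positivity
    have hL : ENNReal.ofReal (16 * h ^ 2) * ∑ n ∈ T, ENNReal.ofReal ((n : ℝ) ^ 2) * α n ≤
        ∑' n : ℤ, ENNReal.ofReal (phi (n * h)) * α n := by
      refine le_trans ?_ (ENNReal.sum_le_tsum T)
      rw [Finset.mul_sum]
      refine Finset.sum_le_sum fun n hn => ?_
      rw [← mul_assoc, ← ENNReal.ofReal_mul (by positivity)]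
      gcongr
      have hb : |n * h| ≤ 1 / 2 := by
        rw [abs_mul, abs_of_pos hpos]
        calc |(n : ℝ)| * h ≤ N * h := by gcongr; exact hN n hn
          _ = 1 / 2 := by rw [hh]; field_simp
      linarith [le_phi hb, mul_pow (n : ℝ) h 2]
    have hR : ∑' n : ℤ, ENNReal.ofReal (phi (n * h)) * β n ≤
        ENNReal.ofReal (16 * h ^ 2) * (3 * ∑' n : ℤ, ENNReal.ofReal ((n : ℝ) ^ 2) * β n) := by
      rw [← ENNReal.tsum_mul_left, ← ENNReal.tsum_mul_left]
      refine ENNReal.tsum_le_tsum fun n => ?_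
      have e3 : (3 : ℝ≥0∞) = ENNReal.ofReal 3 := by norm_num
      rw [← mul_assoc, ← mul_assoc, e3, ← ENNReal.ofReal_mul (by positivity),
        ← ENNReal.ofReal_mul (by positivity)]
      gcongr
      have hpi : Real.pi ^ 2 ≤ 12 := by nlinarith [Real.pi_lt_d2, Real.pi_pos]
      calc phi (n * h) ≤ 4 * Real.pi ^ 2 * (n * h) ^ 2 := phi_le_sq _
        _ ≤ 4 * 12 * (n * h) ^ 2 := by gcongr
        _ = 16 * h ^ 2 * 3 * (n : ℝ) ^ 2 := by ring
    have h1 := hL.trans ((H h).trans hR)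
    rwa [ENNReal.mul_le_mul_iff_right (by simpa using hpos.ne') ENNReal.ofReal_ne_top] at h1

/-! ### Comparison of the weights, and the conclusion -/

lemma weight_le (s : ℝ) (hs₀ : 0 ≤ s) (hs₁ : s ≤ 1) (x : ℝ) :
    (1 + x ^ 2) ^ s ≤ 1 + |x| ^ (2 * s) := by
  have := Real.rpow_add_le_add_rpow zero_le_one (sq_nonneg x) hs₀ hs₁
  rwa [Real.one_rpow, ← sq_abs, ← Real.rpow_two, ← Real.rpow_mul (abs_nonneg x),
    Real.rpow_two, sq_abs] at this

lemma le_weight (s : ℝ) (hs₀ : 0 ≤ s) (x : ℝ) : |x| ^ (2 * s) ≤ (1 + x ^ 2) ^ s := by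
  rw [Real.rpow_mul (abs_nonneg x), Real.rpow_two, sq_abs]
  exact Real.rpow_le_rpow (sq_nonneg x) (by linarith) hs₀

lemma hsNorm_sq (s : ℝ) (v : AddCircle (1 : ℝ) → ℝ) :
    hsNorm s v ^ 2 = ∑' n : ℤ, ENNReal.ofReal ((1 + (n : ℝ) ^ 2) ^ s) *
      (‖fourierCoeff (fun x => (v x : ℂ)) n‖₊ : ℝ≥0∞) ^ 2 := by
  unfold hsNorm
  rw [← ENNReal.rpow_two, ← ENNReal.rpow_mul]
  norm_num

/-- Parseval's identity for a continuous real-valued function. -/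
lemma parseval_real (v : AddCircle (1 : ℝ) → ℝ) (hv : Continuous v) :
    ∑' n : ℤ, (‖fourierCoeff (fun x => (v x : ℂ)) n‖₊ : ℝ≥0∞) ^ 2 =
      ∫⁻ x, ‖v x‖ₑ ^ 2 ∂AddCircle.haarAddCircle := by
  rw [parseval _ (by fun_prop)]
  refine lintegral_congr fun x => ?_
  rw [← ofReal_norm, ← ofReal_norm, Complex.norm_real]

lemma hsNorm_sq_le (s : ℝ) (hs₀ : 0 ≤ s) (hs₁ : s ≤ 1) (v : AddCircle (1 : ℝ) → ℝ) :
    hsNorm s v ^ 2 ≤ ∑' n : ℤ, (‖fourierCoeff (fun x => (v x : ℂ)) n‖₊ : ℝ≥0∞) ^ 2 +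
      ∑' n : ℤ, ENNReal.ofReal (|(n : ℝ)| ^ (2 * s)) *
        (‖fourierCoeff (fun x => (v x : ℂ)) n‖₊ : ℝ≥0∞) ^ 2 := by
  rw [hsNorm_sq, ← ENNReal.tsum_add]
  refine ENNReal.tsum_le_tsum fun n => ?_
  rw [← one_add_mul]
  gcongr
  rw [← ENNReal.ofReal_one, ← ENNReal.ofReal_add zero_le_one (by positivity)]
  exact ENNReal.ofReal_le_ofReal (weight_le s hs₀ hs₁ n)

lemma homogeneous_le_hsNorm_sq (s : ℝ) (hs₀ : 0 ≤ s) (v : AddCircle (1 : ℝ) → ℝ) :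
    ∑' n : ℤ, ENNReal.ofReal (|(n : ℝ)| ^ (2 * s)) *
        (‖fourierCoeff (fun x => (v x : ℂ)) n‖₊ : ℝ≥0∞) ^ 2 ≤ hsNorm s v ^ 2 := by
  rw [hsNorm_sq]
  exact ENNReal.tsum_le_tsum fun n => by gcongr; exact le_weight s hs₀ n

lemma l2_le_hsNorm_sq (s : ℝ) (hs₀ : 0 ≤ s) (v : AddCircle (1 : ℝ) → ℝ) :
    ∑' n : ℤ, (‖fourierCoeff (fun x => (v x : ℂ)) n‖₊ : ℝ≥0∞) ^ 2 ≤ hsNorm s v ^ 2 := by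
  rw [hsNorm_sq]
  refine ENNReal.tsum_le_tsum fun n => le_mul_of_one_le_left zero_le ?_
  rw [← ENNReal.ofReal_one]
  exact ENNReal.ofReal_le_ofReal
    (Real.one_le_rpow (by linarith [sq_nonneg (n : ℝ)]) hs₀)

/-- for `s ∈ (1/2,1]` and `F` smooth with bounded first and second
derivatives, there is `C > 0` such that for all `v, w ∈ H^s(𝕋)` (identified with
their continuous representatives),
`‖F∘v − F∘w‖_{H^s} ≤ C (‖v − w‖_{H^s} + ‖w‖_{H^s} ‖v − w‖_{L^∞})`. -/
theorem smooth_composition_Hs_diff_bounded (s : ℝ) (hs₁ : 1 / 2 < s) (hs₂ : s ≤ 1)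
    (F : ℝ → ℝ) (hF : ContDiff ℝ (⊤ : ℕ∞) F)
    (K : ℝ) (hK₁ : ∀ x : ℝ, |deriv F x| ≤ K) (hK₂ : ∀ x : ℝ, |deriv (deriv F) x| ≤ K) :
    ∃ C : ℝ, 0 < C ∧
      ∀ v w : AddCircle (1 : ℝ) → ℝ, Continuous v → Continuous w →
        hsNorm s v ≠ ⊤ → hsNorm s w ≠ ⊤ →
        hsNorm s (fun x => F (v x) - F (w x)) ≤
          ENNReal.ofReal C *
            (hsNorm s (fun x => v x - w x) +
              hsNorm s w * ENNReal.ofReal (⨆ x, |v x - w x|)) := by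
  have hK : 0 ≤ K := (abs_nonneg _).trans (hK₁ 0)
  have hs₀ : 0 < s := by linarith
  have hFc : Continuous F := hF.continuous
  refine ⟨3 * K + 1, by positivity, fun v w hv hw _ _ => ?_⟩
  set M : ℝ := ⨆ x, |v x - w x| with hM
  have hM_le : ∀ x, |v x - w x| ≤ M := fun x =>
    le_ciSup (isCompact_range (by fun_prop : Continuous fun x => |v x - w x|)).bddAbove x
  have hM0 : 0 ≤ M := (abs_nonneg _).trans (hM_le 0)
  have hsq : ∀ r : ℝ, ‖r‖ₑ ^ 2 = ENNReal.ofReal (r ^ 2) := fun r => by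
    rw [← ofReal_norm, ← ENNReal.ofReal_pow (norm_nonneg _), Real.norm_eq_abs, sq_abs]
  have hpt : ∀ x y, (F (v y) - F (w y) - (F (v x) - F (w x))) ^ 2 ≤
      2 * K ^ 2 * ((v y - w y) - (v x - w x)) ^ 2 + 2 * K ^ 2 * M ^ 2 * (w y - w x) ^ 2 := by
    intro x y
    have h1 := second_difference F hF K hK₁ hK₂ (v x) (w x) (v y) (w y)
    have h2 : K * |v x - w x| * |w y - w x| ≤ K * M * |w y - w x| := by
      gcongr; exact hM_le x
    rw [← sq_abs (F (v y) - F (w y) - (F (v x) - F (w x))), ← sq_abs (v y - w y - (v x - w x)),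
      ← sq_abs (w y - w x)]
    calc _ ≤ (K * |v y - w y - (v x - w x)| + K * M * |w y - w x|) ^ 2 := by
          gcongr; linarith
      _ ≤ 2 * ((K * |v y - w y - (v x - w x)|) ^ 2 + (K * M * |w y - w x|) ^ 2) := add_sq_le
      _ = _ := by ring
  have hlip : ∀ x, (F (v x) - F (w x)) ^ 2 ≤ K ^ 2 * (v x - w x) ^ 2 := by
    intro x
    have h := convex_univ.norm_image_sub_le_of_norm_deriv_le (f := F)
      (fun z _ => (hF.differentiable (by simp)) z) (fun z _ => hK₁ z)
      (Set.mem_univ (w x)) (Set.mem_univ (v x))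
    rw [Real.norm_eq_abs, Real.norm_eq_abs] at h
    rw [← sq_abs, ← sq_abs (v x - w x), ← mul_pow]
    gcongr
  set A : ℝ≥0∞ := ENNReal.ofReal (K ^ 2) with hA
  set m : ℝ≥0∞ := ENNReal.ofReal M with hm
  have h2A : ENNReal.ofReal (2 * K ^ 2) = 2 * A := by
    rw [ENNReal.ofReal_mul zero_le_two, ENNReal.ofReal_ofNat]
  have h2B : ENNReal.ofReal (2 * K ^ 2 * M ^ 2) = 2 * A * m ^ 2 := by
    rw [ENNReal.ofReal_mul (by positivity), h2A, ENNReal.ofReal_pow hM0]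
  have hlow : ∑' n : ℤ,
      (‖fourierCoeff (fun x => ((F (v x) - F (w x) : ℝ) : ℂ)) n‖₊ : ℝ≥0∞) ^ 2 ≤
      A * hsNorm s (fun x => v x - w x) ^ 2 := by
    refine le_trans ?_ (mul_le_mul_right (l2_le_hsNorm_sq s hs₀.le _) _)
    rw [parseval_real (fun x => F (v x) - F (w x)) (by fun_prop),
      parseval_real (fun x => v x - w x) (by fun_prop),
      ← lintegral_const_mul' _ _ ENNReal.ofReal_ne_top]
    refine lintegral_mono fun x => ?_
    rw [hsq, hsq, ← ENNReal.ofReal_mul (by positivity)]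
    exact ENNReal.ofReal_le_ofReal (hlip x)
  have hhigh := transfer s hs₀ hs₂
    (fun n => (‖fourierCoeff (fun x => ((F (v x) - F (w x) : ℝ) : ℂ)) n‖₊ : ℝ≥0∞) ^ 2)
    (fun n => 2 * A * (‖fourierCoeff (fun x => ((v x - w x : ℝ) : ℂ)) n‖₊ : ℝ≥0∞) ^ 2 +
      2 * A * m ^ 2 * (‖fourierCoeff (fun x => (w x : ℂ)) n‖₊ : ℝ≥0∞) ^ 2) (by
    intro h
    simp_rw [mul_add, mul_left_comm (ENNReal.ofReal (phi _))]
    rw [ENNReal.tsum_add, ENNReal.tsum_mul_left, ENNReal.tsum_mul_left,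
      parseval_increment (fun x => F (v x) - F (w x)) (by fun_prop),
      parseval_increment (fun x => v x - w x) (by fun_prop), parseval_increment w hw,
      ← h2B, ← h2A, ← lintegral_const_mul' _ _ ENNReal.ofReal_ne_top,
      ← lintegral_const_mul' _ _ ENNReal.ofReal_ne_top,
      ← lintegral_add_left (by
        have := hv.measurable
        have := hw.measurable
        fun_prop)]
    refine lintegral_mono fun x => ?_
    simp only [hsq]
    rw [← ENNReal.ofReal_mul (by positivity), ← ENNReal.ofReal_mul (by positivity),
      ← ENNReal.ofReal_add (by positivity) (by positivity)]
    exact ENNReal.ofReal_le_ofReal (hpt x _))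
  simp_rw [mul_add, mul_left_comm (ENNReal.ofReal (|((_ : ℤ) : ℝ)| ^ (2 * s)))] at hhigh
  rw [ENNReal.tsum_add, ENNReal.tsum_mul_left, ENNReal.tsum_mul_left] at hhigh
  have hg := homogeneous_le_hsNorm_sq s hs₀.le (fun x => v x - w x)
  have hw' := homogeneous_le_hsNorm_sq s hs₀.le w
  set a := hsNorm s (fun x => v x - w x)
  set b := hsNorm s w
  have hC : 7 * A ≤ ENNReal.ofReal (3 * K + 1) ^ 2 := by
    rw [← ENNReal.ofReal_pow (by positivity), hA, ← ENNReal.ofReal_ofNat,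
      ← ENNReal.ofReal_mul (by norm_num)]
    exact ENNReal.ofReal_le_ofReal (by nlinarith)
  rw [← ENNReal.pow_le_pow_left_iff two_ne_zero]
  calc _ ≤ _ := hsNorm_sq_le s hs₀.le hs₂ _
    _ ≤ A * a ^ 2 + (3 * (2 * A * a ^ 2) + 3 * (2 * A * m ^ 2 * b ^ 2)) := by
      rw [← mul_add]
      refine add_le_add hlow ?_
      refine hhigh.trans ?_
      gcongr
    _ ≤ 7 * A * (a ^ 2 + (b * m) ^ 2) := by
      have e : 7 * A * (a ^ 2 + (b * m) ^ 2) =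
        A * a ^ 2 + (3 * (2 * A * a ^ 2) + 3 * (2 * A * m ^ 2 * b ^ 2)) + A * (b * m) ^ 2 := by
        ring
      rw [e]; exact le_self_add
    _ ≤ ENNReal.ofReal (3 * K + 1) ^ 2 * (a + b * m) ^ 2 := by
      gcongr
      have e : (a + b * m) ^ 2 = a ^ 2 + (b * m) ^ 2 + 2 * (a * (b * m)) := by ring
      rw [e]; exact le_self_add
    _ = _ := by rw [mul_pow]
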